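/- The permutation η₁ has order n, the permutation η₂ has order 2m, the product η₁η₂ has order 2, and the subgroup H = ⟨η₁, η₂⟩ of the automorphism group of Γ has order 2m²n. -/

import Mathlib

/-- The lexicographic product `C_n[mK_1]`: vertices `(i,j)` with `(i₁,j₁) ~ (i₂,j₂)`
iff `i₂ = i₁ + 1` or `i₁ = i₂ + 1` (indices modulo `n`). -/
def lexCycle (n m : ℕ) : SimpleGraph (ZMod n × ZMod m) :=
  SimpleGraph.fromRel (fun u v => v.1 = u.1 + 1)

/-- The representative in `{1, …, n}` of `i` modulo `n`. -/
def zrep {n : ℕ} (i : ZMod n) : ℕ := if i.val = 0 then n else i.val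

/-!
In the coordinate `y = (-1)^i (j - 1) + 1/8` on the fibre over `i`, the first permutation becomes
`(i, y) ↦ (i + 1, y)` and the second `(i, y) ↦ (2 - i, -y + (-1)^i (i/2 - 3/4))`: the floor
`⌊(ī - 1)/2⌋` equals `(2i - 3 - (-1)^i)/4` modulo `m`, and the shift by `1/8` absorbs the
constant `-1/4` that the term `-(-1)^i` leaves after multiplication by `(-1)^i`. Both maps thus
have the shape `(i, y) ↦ (a ± i, ± y + (-1)^i (α i + β))`. Maps of this shape form a group of order
`2 · n · m²`, and since the square of the second one is the shear `(α, β) = (-1, 1)`, whose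
conjugate by the first is `(1, -2)`, all shears, hence all such maps, are generated.
-/

section SignCharacters

theorem intCast_units_mul_self {R : Type*} [Ring R] (ε : ℤˣ) : ((ε : ℤ) : R) * (ε : ℤ) = 1 := by
  rw [← Int.cast_mul, Int.units_coe_mul_self, Int.cast_one]

theorem intCast_units_injective {R : Type*} [Ring R] (h2 : (2 : R) ≠ 0) :
    Function.Injective fun ε : ℤˣ ↦ ((ε : ℤ) : R) := by
  have neg_ne : (-1 : R) ≠ 1 := by rwa [ne_eq, neg_eq_iff_add_eq_zero, one_add_one_eq_two]
  intro ε δ h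
  rcases Int.units_eq_one_or ε with rfl | rfl <;> rcases Int.units_eq_one_or δ with rfl | rfl <;>
    simp_all [neg_ne.symm]

theorem signChar_neg {A : Type*} [AddCommGroup A] (χ : AddChar A ℤˣ) (a : A) : χ (-a) = χ a := by
  rw [AddChar.map_neg_eq_inv, Int.units_inv_eq_self]

theorem signChar_units_mul {A : Type*} [Ring A] (χ : AddChar A ℤˣ) (ε : ℤˣ) (a : A) :
    χ ((ε : ℤ) * a) = χ a := by
  rcases Int.units_eq_one_or ε with rfl | rfl <;> simp [signChar_neg]

theorem signChar_two {A : Type*} [AddMonoidWithOne A] (χ : AddChar A ℤˣ) : χ 2 = 1 := by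
  rw [← one_add_one_eq_two, AddChar.map_add_eq_mul, Int.units_mul_self]

end SignCharacters

/-- The map `(i, y) ↦ (shift + sign * i, sign * y + χ i * (slope * L i + intercept))` of `A × R`,
encoded by its four parameters. The arguments `L` and `χ` only enter through the group law and the
action below. -/
@[ext]
structure TwistedAffine {A R : Type*} [CommRing A] [CommRing R] (L : A →+* R)
    (χ : AddChar A ℤˣ) where
  sign : ℤˣ
  shift : A
  slope : R
  intercept : R

namespace TwistedAffine

variable {A R : Type*} [CommRing A] [CommRing R] {L : A →+* R} {χ : AddChar A ℤˣ}

instance : One (TwistedAffine L χ) := ⟨⟨1, 0, 0, 0⟩⟩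

instance : Mul (TwistedAffine L χ) :=
  ⟨fun g h ↦
    { sign := g.sign * h.sign
      shift := g.shift + (g.sign : ℤ) * h.shift
      slope := (g.sign : ℤ) * h.slope + (χ h.shift : ℤ) * g.slope * (h.sign : ℤ)
      intercept := (g.sign : ℤ) * h.intercept +
        (χ h.shift : ℤ) * (g.slope * L h.shift + g.intercept) }⟩

instance : Inv (TwistedAffine L χ) :=
  ⟨fun g ↦
    { sign := g.sign
      shift := -((g.sign : ℤ) * g.shift)
      slope := -((χ g.shift : ℤ) * g.slope)
      intercept := (χ g.shift : ℤ) * (g.slope * L g.shift - (g.sign : ℤ) * g.intercept) }⟩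

@[simp] theorem sign_one : (1 : TwistedAffine L χ).sign = 1 := rfl
@[simp] theorem shift_one : (1 : TwistedAffine L χ).shift = 0 := rfl
@[simp] theorem slope_one : (1 : TwistedAffine L χ).slope = 0 := rfl
@[simp] theorem intercept_one : (1 : TwistedAffine L χ).intercept = 0 := rfl

section Mul

variable (g h : TwistedAffine L χ)

@[simp] theorem sign_mul : (g * h).sign = g.sign * h.sign := rfl

@[simp] theorem shift_mul : (g * h).shift = g.shift + (g.sign : ℤ) * h.shift := rfl

@[simp] theorem slope_mul :
    (g * h).slope = (g.sign : ℤ) * h.slope + (χ h.shift : ℤ) * g.slope * (h.sign : ℤ) := rfl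

@[simp] theorem intercept_mul :
    (g * h).intercept = (g.sign : ℤ) * h.intercept +
      (χ h.shift : ℤ) * (g.slope * L h.shift + g.intercept) := rfl

protected theorem mul_assoc (k : TwistedAffine L χ) : g * h * k = g * (h * k) := by
  ext
  · simp [mul_assoc]
  · simp only [shift_mul, sign_mul, Units.val_mul, Int.cast_mul]
    ring
  · simp only [slope_mul, sign_mul, shift_mul, Units.val_mul, Int.cast_mul, AddChar.map_add_eq_mul,
      signChar_units_mul]
    ring
  · simp only [intercept_mul, slope_mul, sign_mul, shift_mul, Units.val_mul, Int.cast_mul,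
      AddChar.map_add_eq_mul, signChar_units_mul, map_add, map_mul, map_intCast]
    ring

protected theorem one_mul : 1 * g = g := by ext <;> simp

@[simp] theorem sign_inv : g⁻¹.sign = g.sign := rfl

@[simp] theorem shift_inv : g⁻¹.shift = -((g.sign : ℤ) * g.shift) := rfl

@[simp] theorem slope_inv : g⁻¹.slope = -((χ g.shift : ℤ) * g.slope) := rfl

@[simp] theorem intercept_inv :
    g⁻¹.intercept = (χ g.shift : ℤ) * (g.slope * L g.shift - (g.sign : ℤ) * g.intercept) := rfl

protected theorem inv_mul_cancel : g⁻¹ * g = 1 := by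
  have hχ := intCast_units_mul_self (R := R) (χ g.shift)
  ext
  · simp
  · simp
  · simp only [slope_mul, sign_inv, slope_inv, slope_one]
    linear_combination -(g.sign : ℤ) * g.slope * hχ
  · simp only [intercept_mul, sign_inv, slope_inv, intercept_inv, intercept_one]
    linear_combination -(g.sign : ℤ) * g.intercept * hχ

end Mul

instance : Group (TwistedAffine L χ) :=
  Group.ofLeftAxioms TwistedAffine.mul_assoc TwistedAffine.one_mul TwistedAffine.inv_mul_cancel

theorem natCard : Nat.card (TwistedAffine L χ) = 2 * Nat.card R ^ 2 * Nat.card A := by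
  let e : TwistedAffine L χ ≃ ℤˣ × A × R × R :=
    { toFun g := (g.sign, g.shift, g.slope, g.intercept)
      invFun p := ⟨p.1, p.2.1, p.2.2.1, p.2.2.2⟩ }
  rw [Nat.card_congr e]
  simp only [Nat.card_prod, Nat.card_eq_fintype_card (α := ℤˣ), Fintype.card_units_int]
  ring

section Action

instance : SMul (TwistedAffine L χ) (A × R) where
  smul g x := (g.shift + (g.sign : ℤ) * x.1,
    (g.sign : ℤ) * x.2 + (χ x.1 : ℤ) * (g.slope * L x.1 + g.intercept))

@[simp] theorem fst_smul (g : TwistedAffine L χ) (x : A × R) :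
    (g • x).1 = g.shift + (g.sign : ℤ) * x.1 := rfl

@[simp] theorem snd_smul (g : TwistedAffine L χ) (x : A × R) :
    (g • x).2 = (g.sign : ℤ) * x.2 + (χ x.1 : ℤ) * (g.slope * L x.1 + g.intercept) := rfl

instance : MulAction (TwistedAffine L χ) (A × R) where
  one_smul x := by ext <;> simp
  mul_smul g h x := by
    ext
    · simp only [fst_smul, shift_mul, sign_mul, Units.val_mul, Int.cast_mul]
      ring
    · simp only [fst_smul, snd_smul, sign_mul, slope_mul, intercept_mul, Units.val_mul,
        Int.cast_mul, AddChar.map_add_eq_mul, signChar_units_mul, map_add, map_mul, map_intCast]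
      ring

theorem faithfulSMul (h2 : (2 : A) ≠ 0) : FaithfulSMul (TwistedAffine L χ) (A × R) where
  eq_of_smul_eq_smul {g h} hgh := by
    have h00 := hgh (0, 0)
    have h10 := hgh (1, 0)
    simp only [Prod.ext_iff, fst_smul, snd_smul, mul_zero, add_zero, zero_add, mul_one, map_zero,
      map_one, AddChar.map_zero_eq_one, Units.val_one, Int.cast_one, one_mul] at h00 h10
    obtain ⟨hshift, hintercept⟩ := h00
    have hsign : ((g.sign : ℤ) : A) = (h.sign : ℤ) := by
      linear_combination h10.1 - hshift
    have hslope : g.slope = h.slope := by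
      linear_combination (χ 1 : ℤ) * h10.2 - hintercept -
        (g.slope + g.intercept - h.slope - h.intercept) * intCast_units_mul_self (R := R) (χ 1)
    exact TwistedAffine.ext (intCast_units_injective h2 hsign) hshift hslope hintercept

end Action

section Generators

/-- `sign` as a homomorphism. -/
def signHom : TwistedAffine L χ →* ℤˣ where
  toFun := sign
  map_one' := rfl
  map_mul' _ _ := rfl

/-- The maps `(i, y) ↦ (i + a, y)`. -/
@[simps]
def translation (L : A →+* R) (χ : AddChar A ℤˣ) : Multiplicative A →* TwistedAffine L χ where
  toFun a := ⟨1, a.toAdd, 0, 0⟩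
  map_one' := rfl
  map_mul' a b := by ext <;> simp

/-- The maps `(i, y) ↦ (i, y + χ i * (α * L i + β))`, indexed by the pairs `(α, β)`. -/
@[simps]
def shear (L : A →+* R) (χ : AddChar A ℤˣ) : Multiplicative (R × R) →* TwistedAffine L χ where
  toFun p := ⟨1, 0, p.toAdd.1, p.toAdd.2⟩
  map_one' := rfl
  map_mul' p q := by ext <;> simp [add_comm]

/-- The map `(i, y) ↦ (2 - i, -y + χ i * (4 * c * L i - 6 * c))`, of interest for `c = 1 / 8`. -/
@[simps]
def reflection (L : A →+* R) (χ : AddChar A ℤˣ) (c : R) : TwistedAffine L χ :=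
  ⟨-1, 2, 4 * c, -(6 * c)⟩

theorem translation_injective : Function.Injective (translation L χ) :=
  fun _ _ h ↦ congrArg shift h

theorem shear_injective : Function.Injective (shear L χ) :=
  fun _ _ h ↦ Prod.ext (congrArg slope h) (congrArg intercept h)

theorem translation_mul_shear_of_sign_eq_one {g : TwistedAffine L χ} (hg : g.sign = 1) :
    translation L χ (.ofAdd g.shift) * shear L χ (.ofAdd (g.slope, g.intercept)) = g := by
  ext <;> simp [hg]

theorem conj_translation_one_shear (hχ : χ 1 = -1) (α β : R) :
    translation L χ (.ofAdd 1) * shear L χ (.ofAdd (α, β)) * (translation L χ (.ofAdd 1))⁻¹ =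
      shear L χ (.ofAdd (-α, α - β)) := by
  rw [mul_inv_eq_iff_eq_mul]
  ext <;> simp [hχ]

theorem reflection_sq {c : R} (hc : 8 * c = 1) :
    reflection L χ c ^ 2 = shear L χ (.ofAdd (-1, 1)) := by
  rw [pow_two]
  ext
  · simp
  · simp
  · simp only [slope_mul, reflection_sign, reflection_slope, reflection_shift, signChar_two,
      shear_apply_slope, toAdd_ofAdd, Units.val_neg, Units.val_one, Int.cast_neg, Int.cast_one]
    linear_combination -hc
  · simp only [intercept_mul, reflection_sign, reflection_slope, reflection_shift,
      reflection_intercept, signChar_two, shear_apply_intercept, toAdd_ofAdd, map_ofNat,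
      Units.val_neg, Units.val_one, Int.cast_neg, Int.cast_one]
    linear_combination hc

theorem orderOf_translation_one : orderOf (translation L χ (.ofAdd 1)) = addOrderOf (1 : A) := by
  rw [orderOf_injective _ translation_injective, orderOf_ofAdd_eq_addOrderOf]

theorem orderOf_reflection {c : R} (hc : 8 * c = 1) :
    orderOf (reflection L χ c) = 2 * addOrderOf (1 : R) := by
  have two_dvd : 2 ∣ orderOf (reflection L χ c) := by
    have orderOf_sign : orderOf (-1 : ℤˣ) = 2 := orderOf_eq_prime (by simp) (by decide)
    exact orderOf_sign ▸ orderOf_map_dvd signHom (reflection L χ c)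
  have sq_order : orderOf (reflection L χ c ^ 2) = addOrderOf (1 : R) := by
    rw [reflection_sq hc, orderOf_injective _ shear_injective, orderOf_ofAdd_eq_addOrderOf,
      Prod.addOrderOf, addOrderOf_neg, Nat.lcm_self]
  rw [← sq_order, orderOf_pow_of_dvd two_ne_zero two_dvd, Nat.mul_div_cancel' two_dvd]

theorem orderOf_translation_one_mul_reflection (hχ : χ 1 = -1) (c : R) :
    orderOf (translation L χ (.ofAdd 1) * reflection L χ c) = 2 := by
  refine orderOf_eq_prime ?_ fun h ↦ ?_
  · have hmul : translation L χ (.ofAdd 1) * reflection L χ c = ⟨-1, 1 + 2, 4 * c, -(6 * c)⟩ := by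
      ext <;> simp
    have hχ3 : χ (1 + 2) = -1 := by rw [AddChar.map_add_eq_mul, signChar_two, hχ, mul_one]
    rw [hmul, pow_two]
    ext
    · simp
    · simp
    · simp [hχ3]
    · simp only [intercept_mul, hχ3, Units.val_neg, Units.val_one, Int.cast_neg, Int.cast_one,
        map_add, map_one, map_ofNat, intercept_one]
      ring
  · exact absurd (congrArg sign h) (by simp)

variable {H : Subgroup (TwistedAffine L χ)}

theorem translation_mem (hA : Function.Surjective ((↑) : ℤ → A))
    (h1 : translation L χ (.ofAdd 1) ∈ H) (a : A) : translation L χ (.ofAdd a) ∈ H := by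
  obtain ⟨k, rfl⟩ := hA a
  simpa [← map_zpow, ← ofAdd_zsmul] using H.zpow_mem h1 k

theorem shear_mem (hR : Function.Surjective ((↑) : ℤ → R)) (h₁ : shear L χ (.ofAdd (-1, 1)) ∈ H)
    (h₂ : shear L χ (.ofAdd (1, -2)) ∈ H) (α β : R) : shear L χ (.ofAdd (α, β)) ∈ H := by
  obtain ⟨k, hk⟩ := hR (-(2 * α + β))
  obtain ⟨l, hl⟩ := hR (-(α + β))
  have hα : α = -k + l := by rw [hk, hl]; ring
  have hβ : β = k - 2 * l := by rw [hk, hl]; ring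
  have decomposition : (α, β) = k • ((-1, 1) : R × R) + l • (1, -2) := by
    ext
    · simpa using hα
    · simpa [mul_comm, sub_eq_add_neg] using hβ
  rw [decomposition, ofAdd_add, ofAdd_zsmul, ofAdd_zsmul, map_mul, map_zpow, map_zpow]
  exact mul_mem (zpow_mem h₁ k) (zpow_mem h₂ l)

theorem closure_translation_one_reflection (hA : Function.Surjective ((↑) : ℤ → A))
    (hR : Function.Surjective ((↑) : ℤ → R)) (hχ : χ 1 = -1) {c : R} (hc : 8 * c = 1) :
    Subgroup.closure {translation L χ (.ofAdd 1), reflection L χ c} = ⊤ := by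
  set H := Subgroup.closure {translation L χ (.ofAdd 1), reflection L χ c}
  have hr : translation L χ (.ofAdd 1) ∈ H := Subgroup.subset_closure (by simp)
  have ht : reflection L χ c ∈ H := Subgroup.subset_closure (by simp)
  have shear_neg_one_one : shear L χ (.ofAdd (-1, 1)) ∈ H := by
    rw [← reflection_sq hc]
    exact pow_mem ht 2
  have shear_one_neg_two : shear L χ (.ofAdd (1, -2)) ∈ H := by
    have := mul_mem (mul_mem hr shear_neg_one_one) (inv_mem hr)
    rw [conj_translation_one_shear hχ] at this
    convert this using 4 <;> ring
  have mem_of_sign_eq_one {g : TwistedAffine L χ} (hg : g.sign = 1) : g ∈ H := by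
    rw [← translation_mul_shear_of_sign_eq_one hg]
    exact mul_mem (translation_mem hA hr _) (shear_mem hR shear_neg_one_one shear_one_neg_two _ _)
  refine eq_top_iff.2 fun g _ ↦ ?_
  rcases Int.units_eq_one_or g.sign with hg | hg
  · exact mem_of_sign_eq_one hg
  · rw [← H.mul_mem_cancel_right ht]
    exact mem_of_sign_eq_one (by simp [hg])

end Generators

section Untwist

/-- The coordinate change `(i, j) ↦ (i, χ i * (j - 1) + c)`, which carries the permutations of the
theorem to elements of `TwistedAffine L χ`. -/
def twist (χ : AddChar A ℤˣ) (c : R) : A × R ≃ A × R where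
  toFun x := (x.1, (χ x.1 : ℤ) * (x.2 - 1) + c)
  invFun x := (x.1, (χ x.1 : ℤ) * (x.2 - c) + 1)
  left_inv x := by
    ext
    · rfl
    · linear_combination (x.2 - 1) * intCast_units_mul_self (R := R) (χ x.1)
  right_inv x := by
    ext
    · rfl
    · linear_combination (x.2 - c) * intCast_units_mul_self (R := R) (χ x.1)

theorem twist_mk (χ : AddChar A ℤˣ) (c : R) (i : A) (j : R) :
    twist χ c (i, j) = (i, (χ i : ℤ) * (j - 1) + c) := rfl

/-- The action of `TwistedAffine L χ` on `A × R` in the coordinates untwisted by `twist χ c`. -/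
def toPermUntwisted (L : A →+* R) (χ : AddChar A ℤˣ) (c : R) :
    TwistedAffine L χ →* Equiv.Perm (A × R) :=
  (twist χ c).symm.permCongrHom.toMonoidHom.comp (MulAction.toPermHom _ _)

theorem toPermUntwisted_injective (h2 : (2 : A) ≠ 0) (c : R) :
    Function.Injective (toPermUntwisted L χ c) :=
  have := faithfulSMul (L := L) (χ := χ) h2
  (twist χ c).symm.permCongrHom.injective.comp MulAction.toPerm_injective

theorem toPermUntwisted_apply_eq_iff {c : R} {g : TwistedAffine L χ} {x y : A × R} :
    toPermUntwisted L χ c g x = y ↔ g • twist χ c x = twist χ c y :=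
  (twist χ c).symm_apply_eq

theorem toPermUntwisted_translation_one (hχ : χ 1 = -1) (c : R) (i : A) (j : R) :
    toPermUntwisted L χ c (translation L χ (.ofAdd 1)) (i, j) = (i + 1, 2 - j) := by
  rw [toPermUntwisted_apply_eq_iff, twist_mk, twist_mk]
  ext
  · simp [add_comm]
  · simp only [snd_smul, translation_apply_sign, translation_apply_slope,
      translation_apply_intercept, AddChar.map_add_eq_mul, hχ, mul_neg, mul_one, Units.val_neg,
      Units.val_one, Int.cast_neg, Int.cast_one]
    ring

theorem toPermUntwisted_reflection (c : R) (i : A) (j : R) :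
    toPermUntwisted L χ c (reflection L χ c) (i, j) =
      (2 - i, 2 - j + 2 * c * (2 * L i - 3 - (χ i : ℤ))) := by
  have hχ : χ (2 - i) = χ i := by
    rw [sub_eq_add_neg, AddChar.map_add_eq_mul, signChar_two, one_mul, signChar_neg]
  rw [toPermUntwisted_apply_eq_iff, twist_mk, twist_mk, hχ]
  ext
  · simp [sub_eq_add_neg]
  · simp only [snd_smul, reflection_sign, reflection_slope, reflection_intercept, Units.val_neg,
      Units.val_one, Int.cast_neg, Int.cast_one]
    linear_combination 2 * c * intCast_units_mul_self (R := R) (χ i)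

end Untwist

end TwistedAffine

section ZRep

variable {n : ℕ} [NeZero n]

theorem natCast_zrep (i : ZMod n) : (zrep i : ZMod n) = i := by
  unfold zrep
  split_ifs with h
  · rw [ZMod.natCast_self, (ZMod.val_eq_zero i).1 h]
  · exact ZMod.natCast_zmod_val i

theorem zrep_pos (i : ZMod n) : 0 < zrep i := by
  have := NeZero.pos n
  unfold zrep
  split_ifs <;> omega

end ZRep

theorem four_mul_natCast_pred_half {R : Type*} [CommRing R] {k : ℕ} (hk : 0 < k) :
    4 * (((k - 1) / 2 : ℕ) : R) = 2 * k - 3 - (-1) ^ k := by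
  obtain ⟨l, rfl | rfl⟩ : ∃ l, k = 2 * l + 1 ∨ k = 2 * l + 2 := ⟨(k - 1) / 2, by omega⟩
  · rw [show (2 * l + 1 - 1) / 2 = l by omega, (odd_two_mul_add_one l).neg_one_pow]
    push_cast
    ring
  · rw [show (2 * l + 2 - 1) / 2 = l by omega, Even.neg_one_pow ⟨l + 1, by ring⟩]
    push_cast
    ring

/-- The character `i ↦ (-1) ^ i` of `ZMod n` for even `n`. -/
def alternatingChar {n : ℕ} [NeZero n] (hn : Even n) : AddChar (ZMod n) ℤˣ :=
  AddChar.zmodChar n hn.neg_one_pow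

theorem alternatingChar_natCast {n : ℕ} [NeZero n] (hn : Even n) (k : ℕ) :
    alternatingChar hn k = (-1) ^ k :=
  AddChar.zmodChar_apply' hn.neg_one_pow k

theorem alternatingChar_one {n : ℕ} [NeZero n] (hn : Even n) : alternatingChar hn 1 = -1 := by
  simpa using alternatingChar_natCast hn 1

theorem four_mul_zrep_pred_half {m n : ℕ} [NeZero n] (hn : Even n) (hmn : m ∣ n) (i : ZMod n) :
    4 * (((zrep i - 1) / 2 : ℕ) : ZMod m) =
      2 * ZMod.castHom hmn (ZMod m) i - 3 - (alternatingChar hn i : ℤ) := by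
  rw [four_mul_natCast_pred_half (zrep_pos i)]
  nth_rw 3 4 [← natCast_zrep i]
  simp [alternatingChar_natCast]

theorem exists_eight_mul_eq_one {m : ℕ} (hm : Odd m) : ∃ c : ZMod m, 8 * c = 1 := by
  have h8 : IsUnit ((8 : ℕ) : ZMod m) :=
    (ZMod.isUnit_iff_coprime 8 m).2 (hm.coprime_two_left.pow_left 3)
  simpa using h8.exists_right_inv

open TwistedAffine in
theorem statement17_general {m n : ℕ} (hm : Odd m) (hn : Even n) (hn2 : 2 < n) (hmn : m ∣ n)
    (η₁ η₂ : Equiv.Perm (ZMod n × ZMod m))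
    (hη₁ : ∀ (i : ZMod n) (j : ZMod m), η₁ (i, j) = (i + 1, 2 - j))
    (hη₂ : ∀ (i : ZMod n) (j : ZMod m),
      η₂ (i, j) = (2 - i, 2 - j + (((zrep i - 1) / 2 : ℕ) : ZMod m))) :
    orderOf η₁ = n ∧ orderOf η₂ = 2 * m ∧ orderOf (η₁ * η₂) = 2 ∧
      Nat.card (Subgroup.closure {η₁, η₂}) = 2 * m ^ 2 * n := by
  have : NeZero n := ⟨by omega⟩
  obtain ⟨c, hc⟩ := exists_eight_mul_eq_one hm
  have h2 : (2 : ZMod n) ≠ 0 := mod_cast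
    mt (ZMod.natCast_eq_zero_iff 2 n).1 (Nat.not_dvd_of_pos_of_lt two_pos hn2)
  have hχ := alternatingChar_one hn
  let L := ZMod.castHom hmn (ZMod m)
  let χ := alternatingChar hn
  let r := translation L χ (.ofAdd 1)
  let t := reflection L χ c
  let ρ := toPermUntwisted L χ c
  have hρ : Function.Injective ρ := toPermUntwisted_injective h2 c
  obtain rfl : ρ r = η₁ := Equiv.ext fun (i, j) ↦
    (toPermUntwisted_translation_one hχ c i j).trans (hη₁ i j).symm
  obtain rfl : ρ t = η₂ := Equiv.ext fun (i, j) ↦ by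
    rw [toPermUntwisted_reflection, hη₂, ← four_mul_zrep_pred_half hn hmn]
    congr 2
    linear_combination (((zrep i - 1) / 2 : ℕ) : ZMod m) * hc
  have hcard : Nat.card (Subgroup.closure {ρ r, ρ t}) = 2 * m ^ 2 * n := by
    rw [← Set.image_pair, ← MonoidHom.map_closure, Subgroup.card_map_of_injective hρ,
      closure_translation_one_reflection ZMod.intCast_surjective ZMod.intCast_surjective hχ hc,
      Subgroup.card_top, natCard, Nat.card_zmod, Nat.card_zmod]
  refine ⟨?_, ?_, ?_, hcard⟩
  · rw [orderOf_injective ρ hρ, orderOf_translation_one, ZMod.addOrderOf_one]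
  · rw [orderOf_injective ρ hρ, orderOf_reflection hc, ZMod.addOrderOf_one]
  · rw [← map_mul, orderOf_injective ρ hρ, orderOf_translation_one_mul_reflection hχ]

theorem statement17
    (m s n : ℕ) (hm : 3 ≤ m) (hmo : Odd m) (hs : 0 < s) (hs4 : s % 4 = 2) (hn : n = s * m)
    (η₁ η₂ : Equiv.Perm (ZMod n × ZMod m))
    (hη₁ : ∀ (i : ZMod n) (j : ZMod m), η₁ (i, j) = (i + 1, 2 - j))
    (hη₂ : ∀ (i : ZMod n) (j : ZMod m),
      η₂ (i, j) = (2 - i, 2 - j + (((zrep i - 1) / 2 : ℕ) : ZMod m)))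
    :
    orderOf η₁ = n ∧ orderOf η₂ = 2 * m ∧ orderOf (η₁ * η₂) = 2 ∧
      Nat.card (Subgroup.closure {η₁, η₂} : Subgroup (Equiv.Perm (ZMod n × ZMod m))) = 2 * m ^ 2 * n := by
  subst hn
  exact statement17_general hmo ((Nat.even_iff.2 (by omega)).mul_right m)
    (by nlinarith [show 2 ≤ s by omega]) (dvd_mul_left m s) η₁ η₂ hη₁ hη₂
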